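/- There is no Z/2-algebra isomorphism between R_A = (Z/2)[x,y,z]/(x^3*y + y*z^3, y^3 + y*z^2, y^2*z + z^3, x*z, x^4) and R_B = (Z/2)[x,y,z]/(x^2*y^2 + y^2*z^2, y^4 + y^2*z^2, y^2*z + z^3, x*z, x^3) that is induced by a linear bijection of the degree-2 part; in particular, no invertible linear substitution of variables over Z/2 carries the first ideal into the second. -/

import Mathlib

open MvPolynomial

/-!
Weight `x`, `y`, `z` by `2`, `1`, `2`: every monomial of every generator of `I_B` has weight at
least `4`, so `I_B` dies modulo `T ^ 4` along each arc `T ↦ (α T², T, γ T²)`, whereas `y ^ 3` and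
the products `y ℓ` with `ℓ` linear survive. If a substitution with rows `r₀, r₁, r₂` carries `I_A`
into `I_B`, the image of `x z` thus yields `r₂(y) r₀ + r₀(y) r₂ = 0`, so by independence of the rows
`y` occurs in neither of the images of `x` and `z`. The image of `y ^ 3 + y z ^ 2` then yields
`r₁(y) ^ 3 = 0`, although `r₁(y)` is the only entry left in the `y`-column of an
invertible matrix.
-/

variable {R : Type*} [CommRing R]

/-- The linear form with coefficient vector `r`. -/
noncomputable def linearForm {σ : Type*} [Fintype σ] (r : σ → R) : MvPolynomial σ R :=
  ∑ j, C (r j) * X j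

/-- The linear substitution `X i ↦ ∑ j, M i j X j`; the rows of `M` are the images of the
variables. -/
noncomputable def linearSubst {σ : Type*} [Fintype σ] (M : Matrix σ σ R) :
    MvPolynomial σ R →ₐ[R] MvPolynomial σ R :=
  aeval fun i => linearForm (M i)

lemma linearSubst_X {σ : Type*} [Fintype σ] (M : Matrix σ σ R) (i : σ) :
    linearSubst M (X i) = linearForm (M i) :=
  aeval_X _ i

variable (R) in
/-- The ideal `I_A` of relations in case `A₁`, with coefficients in an arbitrary ring. -/
noncomputable def caseAIdeal : Ideal (MvPolynomial (Fin 3) R) :=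
  Ideal.span {X 0 ^ 3 * X 1 + X 1 * X 2 ^ 3, X 1 ^ 3 + X 1 * X 2 ^ 2,
    X 1 ^ 2 * X 2 + X 2 ^ 3, X 0 * X 2, X 0 ^ 4}

variable (R) in
/-- The ideal `I_B` of relations in case `B₁`, with coefficients in an arbitrary ring. -/
noncomputable def caseBIdeal : Ideal (MvPolynomial (Fin 3) R) :=
  Ideal.span {X 0 ^ 2 * X 1 ^ 2 + X 1 ^ 2 * X 2 ^ 2,
    X 1 ^ 4 + X 1 ^ 2 * X 2 ^ 2, X 1 ^ 2 * X 2 + X 2 ^ 3, X 0 * X 2, X 0 ^ 3}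

/-- Restriction of polynomials in `x, y, z` to the arc `T ↦ (α T², T, γ T²)`, which gives `x, y, z`
the weights `2, 1, 2`. -/
noncomputable def weightedArc (α γ : R) : MvPolynomial (Fin 3) R →ₐ[R] Polynomial R :=
  aeval ![Polynomial.C α * Polynomial.X ^ 2, Polynomial.X, Polynomial.C γ * Polynomial.X ^ 2]

lemma weightedArc_linearForm (α γ : R) (r : Fin 3 → R) :
    weightedArc α γ (linearForm r) =
      Polynomial.X * (Polynomial.C (r 1) + Polynomial.C (α * r 0 + γ * r 2) * Polynomial.X) := by
  simp only [weightedArc, linearForm, Fin.sum_univ_three, map_add, map_mul, algHom_C, aeval_X,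
    Polynomial.algebraMap_eq, Matrix.cons_val]
  ring

lemma X_pow_four_dvd_weightedArc_of_mem {p : MvPolynomial (Fin 3) R}
    (hp : p ∈ caseBIdeal R) (α γ : R) :
    Polynomial.X ^ 4 ∣ weightedArc α γ p := by
  suffices h : caseBIdeal R ≤ (Ideal.span {Polynomial.X ^ 4}).comap (weightedArc α γ) from
    Ideal.mem_span_singleton.1 (h hp)
  refine Ideal.span_le.2 ?_
  let a := Polynomial.C α
  let c := Polynomial.C γ
  let T : Polynomial R := Polynomial.X
  rintro q (rfl | rfl | rfl | rfl | rfl) <;>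
    simp only [SetLike.mem_coe, Ideal.mem_comap, Ideal.mem_span_singleton, weightedArc, map_add,
      map_mul, map_pow, aeval_X, Matrix.cons_val]
  · exact ⟨(a ^ 2 + c ^ 2) * T ^ 2, by ring⟩
  · exact ⟨1 + c ^ 2 * T ^ 2, by ring⟩
  · exact ⟨c + c ^ 3 * T ^ 2, by ring⟩
  · exact ⟨a * c, by ring⟩
  · exact ⟨a ^ 3 * T ^ 2, by ring⟩

lemma smul_add_smul_eq_zero_of_linearForm_mul_mem {r s : Fin 3 → R}
    (h : linearForm r * linearForm s ∈ caseBIdeal R) : s 1 • r + r 1 • s = 0 := by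
  let q (α γ : R) : Polynomial R :=
    (Polynomial.C (r 1) + Polynomial.C (α * r 0 + γ * r 2) * Polynomial.X) *
      (Polynomial.C (s 1) + Polynomial.C (α * s 0 + γ * s 2) * Polynomial.X)
  have arc_eq (α γ : R) : weightedArc α γ (linearForm r * linearForm s) =
      Polynomial.X ^ 2 * q α γ := by
    rw [map_mul, weightedArc_linearForm, weightedArc_linearForm]
    ring
  have coeff_q (α γ : R) {k : ℕ} (hk : k + 2 < 4) : (q α γ).coeff k = 0 := by
    rw [← Polynomial.coeff_X_pow_mul _ 2, ← arc_eq]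
    exact Polynomial.X_pow_dvd_iff.1 (X_pow_four_dvd_weightedArc_of_mem h α γ) _ hk
  have y_sq : r 1 * s 1 = 0 := by
    simpa [q, Polynomial.mul_coeff_zero] using coeff_q 0 0 (k := 0) (by norm_num)
  have x_y : r 1 * s 0 + r 0 * s 1 = 0 := by
    simpa [q, Polynomial.mul_coeff_one] using coeff_q 1 0 (k := 1) (by norm_num)
  have y_z : r 1 * s 2 + r 2 * s 1 = 0 := by
    simpa [q, Polynomial.mul_coeff_one] using coeff_q 0 1 (k := 1) (by norm_num)
  ext j
  simp only [Pi.add_apply, Pi.smul_apply, smul_eq_mul, Pi.zero_apply]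
  match j with
  | 0 => linear_combination x_y
  | 1 => linear_combination 2 * y_sq
  | 2 => linear_combination y_z

lemma cube_add_eq_zero_of_linearForm_cube_add_mem {r s : Fin 3 → R}
    (h : linearForm r ^ 3 + linearForm r * linearForm s ^ 2 ∈ caseBIdeal R) :
    r 1 ^ 3 + r 1 * s 1 ^ 2 = 0 := by
  have arc_eq : weightedArc 0 0 (linearForm r ^ 3 + linearForm r * linearForm s ^ 2) =
      Polynomial.C (r 1 ^ 3 + r 1 * s 1 ^ 2) * Polynomial.X ^ 3 := by
    simp only [map_add, map_mul, map_pow, weightedArc_linearForm, zero_mul, add_zero, map_zero]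
    ring
  have coeff_three :=
    Polynomial.X_pow_dvd_iff.1 (X_pow_four_dvd_weightedArc_of_mem h 0 0) 3 (by norm_num)
  rwa [arc_eq, Polynomial.coeff_C_mul_X_pow, if_pos rfl] at coeff_three

lemma eq_zero_of_smul_row_add_smul_row_eq_zero {n : Type*} [Fintype n] [DecidableEq n]
    {M : Matrix n n R} (hM : M.det ∈ nonZeroDivisors R) {i k : n} (hik : i ≠ k) {a b : R}
    (h : a • M i + b • M k = 0) : a = 0 ∧ b = 0 := by
  have coeffs_eq_zero : (Pi.single i a + Pi.single k b : n → R) = 0 := by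
    apply Matrix.eq_zero_of_det_mem_nonZeroDivisors_of_vecMul_eq_zero hM
    rw [Matrix.add_vecMul, Matrix.single_vecMul, Matrix.single_vecMul]
    exact h
  exact ⟨by simpa [hik] using congrFun coeffs_eq_zero i,
    by simpa [hik.symm] using congrFun coeffs_eq_zero k⟩

lemma entry_mem_nonZeroDivisors_of_column {n : Type*} [Fintype n] [DecidableEq n]
    {M : Matrix n n R} (hM : M.det ∈ nonZeroDivisors R) {i j : n}
    (hcol : ∀ k, k ≠ i → M k j = 0) : M i j ∈ nonZeroDivisors R := by
  refine mem_nonZeroDivisors_iff_right.2 fun t ht => ?_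
  have single_eq_zero : Pi.single j t = (0 : n → R) := by
    apply Matrix.eq_zero_of_det_mem_nonZeroDivisors_of_mulVec_eq_zero hM
    ext k
    obtain rfl | hk := eq_or_ne k i
    · simpa [mul_comm] using ht
    · simp [hcol k hk]
  exact Pi.single_eq_zero_iff.1 single_eq_zero

theorem stmt_9_general [Nontrivial R] {M : Matrix (Fin 3) (Fin 3) R}
    (hM : M.det ∈ nonZeroDivisors R) :
    ¬ ∀ p ∈ caseAIdeal R, linearSubst M p ∈ caseBIdeal R := by
  intro h
  have image_xz : linearForm (M 0) * linearForm (M 2) ∈ caseBIdeal R := by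
    rw [← linearSubst_X, ← linearSubst_X, ← map_mul]
    exact h _ (Ideal.subset_span (by simp))
  have image_cubic : linearForm (M 1) ^ 3 + linearForm (M 1) * linearForm (M 2) ^ 2 ∈
      caseBIdeal R := by
    simp only [← linearSubst_X, ← map_pow, ← map_mul, ← map_add]
    exact h _ (Ideal.subset_span (by simp))
  obtain ⟨h₂, h₀⟩ := eq_zero_of_smul_row_add_smul_row_eq_zero hM (by decide)
    (smul_add_smul_eq_zero_of_linearForm_mul_mem image_xz)
  have cube_eq_zero : M 1 1 ^ 3 = 0 := by
    simpa [h₂] using cube_add_eq_zero_of_linearForm_cube_add_mem image_cubic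
  have entry_mem : M 1 1 ∈ nonZeroDivisors R :=
    entry_mem_nonZeroDivisors_of_column hM (by simp [Fin.forall_fin_succ, h₀, h₂])
  exact nonZeroDivisors.ne_zero (pow_mem entry_mem 3) cube_eq_zero

/-- No invertible linear substitution of the variables of `(Z/2)[x,y,z]` carries
the ideal `I_A = (x³y+yz³, y³+yz², y²z+z³, xz, x⁴)` (case A₁) into the ideal
`I_B = (x²y²+y²z², y⁴+y²z², y²z+z³, xz, x³)` (case B₁); hence no isomorphism of
the quotient rings is induced by a linear bijection. Here `x = X 0`, `y = X 1`,
`z = X 2`, and a linear substitution is given by an invertible matrix `M` over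
`Z/2`, sending `X i` to `∑ j, M i j • X j`. -/
theorem stmt_9 (IA IB : Ideal (MvPolynomial (Fin 3) (ZMod 2)))
    (hA : IA = Ideal.span {X 0 ^ 3 * X 1 + X 1 * X 2 ^ 3, X 1 ^ 3 + X 1 * X 2 ^ 2,
      X 1 ^ 2 * X 2 + X 2 ^ 3, X 0 * X 2, X 0 ^ 4})
    (hB : IB = Ideal.span {X 0 ^ 2 * X 1 ^ 2 + X 1 ^ 2 * X 2 ^ 2,
      X 1 ^ 4 + X 1 ^ 2 * X 2 ^ 2, X 1 ^ 2 * X 2 + X 2 ^ 3, X 0 * X 2, X 0 ^ 3}) :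
    ¬ ∃ M : Matrix (Fin 3) (Fin 3) (ZMod 2), IsUnit M.det ∧
      ∀ p ∈ IA, (aeval (fun i => ∑ j, C (M i j) * X j) p : MvPolynomial (Fin 3) (ZMod 2)) ∈ IB := by
  subst hA hB
  rintro ⟨M, hM, h⟩
  exact stmt_9_general hM.mem_nonZeroDivisors h
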